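/- Let c > 0 and let {Pₙ, n = 1,2,…} be a family of probability measures, where Pₙ has an isotropic density on ℝⁿ which is strongly log-concave with the same constant c for every n. Then the family {Pₙ} has exponential Fisher separability. -/

import Mathlib

/-!
Strong log-concavity says `ρ x * ρ y * exp (2c ‖x - y‖ ^ 2) ≤ ρ ((x + y) / 2) ^ 2`. Hence, by the
Prékopa–Leindler inequality, `P(A) * ∫ exp q dP ≤ 1` whenever `q y ≤ 2c ‖x - y‖ ^ 2` for all
`x ∈ A` and all `y`, and Jensen's inequality turns this into `P(A) ≤ exp (-∫ q dP)`
(`measure_le_exp_neg_integral`). Isotropy enters only through `∫ q dP`, in two instances.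

* For the ball `A = {‖x‖ ^ 2 < n / 4}` one can take `q y = c ‖y‖ ^ 2 - c n / 2`, whose mean is
  `c n / 2`.
* For the half-space `A = {y | ⟪x, x⟫ ≤ ⟪x, y⟫}` with `x` fixed one can take
  `q y = 2c ‖x‖ ^ 2 - 4c ⟪x, y⟫`, whose mean is `2c ‖x‖ ^ 2`, at least `c n / 2` for `x` outside
  the ball.

Fubini then bounds the failure probability by `2 exp (-c n / 2)`.

The Prékopa–Leindler inequality is proved here from the one-dimensional Brunn–Minkowski
inequality, applied to level sets, and by tensorization. The density is not assumed measurable;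
its a.e. measurability follows from isotropy (`aemeasurable_of_isIsotropicDensity`).
-/

open MeasureTheory ProbabilityTheory Metric
open scoped RealInnerProductSpace ENNReal

/-- A density `ρ` on `ℝⁿ` is log-concave if `{ρ > 0}` is convex and `-log ρ` is
convex on this set. -/
def IsLogConcaveDensity {n : ℕ} (ρ : EuclideanSpace ℝ (Fin n) → ℝ) : Prop :=
  Convex ℝ {z | 0 < ρ z} ∧ ConvexOn ℝ {z | 0 < ρ z} (fun z => -Real.log (ρ z))

/-- A density `ρ` on `ℝⁿ` is isotropic if it has zero mean and unit variance in
every direction. -/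
def IsIsotropicDensity {n : ℕ} (ρ : EuclideanSpace ℝ (Fin n) → ℝ) : Prop :=
  (∫ z, ρ z • z) = 0 ∧
    ∀ θ : EuclideanSpace ℝ (Fin n), ‖θ‖ = 1 → (∫ z, ρ z * ⟪z, θ⟫ ^ 2) = 1

/-- A density `ρ` on `ℝⁿ` is `ψ_α` with constant `B` if
`(E|(x,θ)|^p)^(1/p) ≤ B p^(1/α) (E|(x,θ)|²)^(1/2)` for all unit `θ` and `p ≥ 2`. -/
def IsPsiAlphaDensity {n : ℕ} (α B : ℝ) (ρ : EuclideanSpace ℝ (Fin n) → ℝ) : Prop :=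
  ∀ θ : EuclideanSpace ℝ (Fin n), ‖θ‖ = 1 → ∀ p : ℝ, 2 ≤ p →
    (∫ z, ρ z * |⟪z, θ⟫| ^ p) ^ (1 / p) ≤
      B * p ^ (1 / α) * (∫ z, ρ z * ⟪z, θ⟫ ^ 2) ^ ((1 : ℝ) / 2)

/-- A family of probability measures `Pₙ` on `ℝⁿ` has exponential Fisher
separability if there are `a > 0`, `b ∈ (0,1)` such that for every `n`, for
independent `x, y` distributed according to `Pₙ`, the inequality
`(x,x) > (x,y)` fails with probability at most `a·bⁿ`. -/
def ExpFisherSeparability (P : ∀ n : ℕ, Measure (EuclideanSpace ℝ (Fin n))) : Prop :=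
  ∃ a > (0 : ℝ), ∃ b ∈ Set.Ioo (0 : ℝ) 1, ∀ n : ℕ,
    ((P n).prod (P n)) {p | ⟪p.1, p.1⟫ ≤ ⟪p.1, p.2⟫} ≤ ENNReal.ofReal (a * b ^ n)

/-- A density `ρ` on `ℝⁿ` is strongly log-concave with constant `c > 0` if
`{ρ > 0}` is convex and `g = -log ρ` satisfies
`(g(u)+g(v))/2 - g((u+v)/2) ≥ c‖u-v‖²` on this set. -/
def IsStronglyLogConcaveDensity {n : ℕ} (c : ℝ)
    (ρ : EuclideanSpace ℝ (Fin n) → ℝ) : Prop :=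
  Convex ℝ {z | 0 < ρ z} ∧
    ∀ u ∈ {z | 0 < ρ z}, ∀ v ∈ {z | 0 < ρ z},
      ((-Real.log (ρ u)) + (-Real.log (ρ v))) / 2
          - (-Real.log (ρ ((2 : ℝ)⁻¹ • (u + v)))) ≥ c * ‖u - v‖ ^ 2

/-! ### The Prékopa–Leindler inequality -/

lemma volume_preimage_midpoint (l : ℝ) (S : Set ℝ) :
    volume ((fun x : ℝ => (x + l) / 2) ⁻¹' S) = 2 * volume S := by
  have h : (fun x : ℝ => (x + l) / 2) ⁻¹' S = (· + l) ⁻¹' ((· * (2 : ℝ)⁻¹) ⁻¹' S) := by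
    ext x; simp [div_eq_mul_inv]
  rw [h, measure_preimage_add_right, Real.volume_preimage_mul_right (by norm_num)]
  simp

/-- With `k = max K` and `l = min L`, the sets `(K + l) / 2` and `(k + L) / 2` lie in `C` and on
either side of `(k + l) / 2`. -/
lemma volume_add_le_of_isCompact {K L C : Set ℝ} (hK : IsCompact K) (hL : IsCompact L)
    (hK0 : K.Nonempty) (hL0 : L.Nonempty) (hC : ∀ x ∈ K, ∀ y ∈ L, (x + y) / 2 ∈ C) :
    volume K + volume L ≤ 2 * volume C := by
  obtain ⟨k, hkK, hk⟩ := hK.exists_isGreatest hK0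
  obtain ⟨l, hlL, hl⟩ := hL.exists_isLeast hL0
  have h1 : volume K ≤ 2 * volume (C ∩ Set.Iic ((k + l) / 2)) := by
    rw [← volume_preimage_midpoint l]
    refine measure_mono fun x hx => ⟨hC x hx l hlL, ?_⟩
    have := hk hx
    simp only [Set.mem_Iic]; linarith
  have h2 : volume L ≤ 2 * volume (C \ Set.Iic ((k + l) / 2)) := by
    have h3 : volume (C \ Set.Iic ((k + l) / 2)) = volume (C ∩ Set.Ici ((k + l) / 2)) := by
      rw [Set.sdiff_eq, Set.compl_Iic]
      exact measure_congr (Filter.EventuallyEq.rfl.inter Ioi_ae_eq_Ici)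
    rw [h3, ← volume_preimage_midpoint k]
    refine measure_mono fun y hy => ⟨by simpa [add_comm] using hC k hkK y hy, ?_⟩
    have := hl hy
    simp only [Set.mem_Ici]; linarith
  calc volume K + volume L ≤ _ := add_le_add h1 h2
    _ = 2 * volume C := by rw [← mul_add, measure_inter_add_sdiff _ measurableSet_Iic]

/-- One-dimensional Brunn–Minkowski inequality, for midpoints. -/
lemma volume_add_le_of_midpoint {A B C : Set ℝ} (hA : MeasurableSet A) (hB : MeasurableSet B)
    (hA0 : A.Nonempty) (hB0 : B.Nonempty) (hC : ∀ x ∈ A, ∀ y ∈ B, (x + y) / 2 ∈ C) :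
    volume A + volume B ≤ 2 * volume C := by
  obtain ⟨a, ha⟩ := hA0
  obtain ⟨b, hb⟩ := hB0
  -- A single point is added to each compact subset to make it nonempty.
  have h1 : ∀ L ⊆ B, IsCompact L → volume A + volume L ≤ 2 * volume C := by
    intro L hLB hL
    suffices volume A ≤ 2 * volume C - volume L by
      by_cases hle : volume L ≤ 2 * volume C
      · calc volume A + volume L ≤ (2 * volume C - volume L) + volume L := by gcongr
          _ = _ := tsub_add_cancel_of_le hle
      · exfalso
        refine hle ?_
        have := volume_add_le_of_isCompact (C := C) (isCompact_singleton (x := a))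
          (hL.union (isCompact_singleton (x := b))) (by simp) (by simp) (by
            rintro x rfl y (hy | rfl)
            · exact hC _ ha _ (hLB hy)
            · exact hC _ ha _ hb)
        calc volume L ≤ volume (L ∪ {b}) := measure_mono Set.subset_union_left
          _ ≤ _ := le_add_self
          _ ≤ _ := this
    rw [hA.measure_eq_iSup_isCompact]
    refine iSup_le fun K => iSup_le fun hKA => iSup_le fun hK => ?_
    refine ENNReal.le_sub_of_add_le_right hL.measure_lt_top.ne ?_
    calc volume K + volume L ≤ volume (K ∪ {a}) + volume (L ∪ {b}) :=
          add_le_add (measure_mono Set.subset_union_left) (measure_mono Set.subset_union_left)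
      _ ≤ _ := volume_add_le_of_isCompact (hK.union isCompact_singleton)
        (hL.union isCompact_singleton) (by simp) (by simp) (by
          rintro x (hx | rfl) y (hy | rfl)
          · exact hC _ (hKA hx) _ (hLB hy)
          · exact hC _ (hKA hx) _ hb
          · exact hC _ ha _ (hLB hy)
          · exact hC _ ha _ hb)
  have hA1 : volume A ≤ 2 * volume C := by
    simpa using h1 ∅ (Set.empty_subset _) isCompact_empty
  by_cases hAtop : volume A = ∞
  · rw [hAtop] at hA1
    rw [top_le_iff.1 hA1]; exact le_top
  suffices volume B ≤ 2 * volume C - volume A by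
    calc volume A + volume B ≤ volume A + (2 * volume C - volume A) := by gcongr
      _ = _ := add_tsub_cancel_of_le hA1
  rw [hB.measure_eq_iSup_isCompact]
  refine iSup_le fun L => iSup_le fun hLB => iSup_le fun hL => ?_
  exact ENNReal.le_sub_of_add_le_left hAtop (h1 L hLB hL)

/-- The arithmetic–geometric mean inequality in `[0, ∞]`. -/
lemma ennreal_mul_le_sq_of_add_le {p q r : ℝ≥0∞} (h : p + q ≤ 2 * r) : p * q ≤ r ^ 2 := by
  by_cases hr : r = ∞
  · simp [hr]
  have hpq : p + q ≠ ∞ := ne_top_of_le_ne_top (by finiteness) h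
  have hp : p ≠ ∞ := by rintro rfl; simp at hpq
  have hq : q ≠ ∞ := by rintro rfl; simp at hpq
  lift p to NNReal using hp
  lift q to NNReal using hq
  lift r to NNReal using hr
  norm_cast at h ⊢
  have h' : (p : ℝ) + q ≤ 2 * r := by exact_mod_cast h
  have : (p : ℝ) * q ≤ r ^ 2 := by
    nlinarith [sq_nonneg ((p : ℝ) - q), p.2, q.2, r.2, p.coe_nonneg, q.coe_nonneg]
  exact_mod_cast this

/-- The one-dimensional Prékopa–Leindler inequality for functions whose suprema are both `1`;
the level sets are compared by Brunn–Minkowski. -/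
lemma prekopaLeindler_real_normalized {f g h : ℝ → ℝ} (hf : Measurable f) (hg : Measurable g)
    (hh : Measurable h) (hf0 : ∀ x, 0 ≤ f x) (hg0 : ∀ x, 0 ≤ g x) (hh0 : ∀ x, 0 ≤ h x)
    (hf1 : ∀ x, f x ≤ 1) (hg1 : ∀ x, g x ≤ 1)
    (hfs : ∀ t < 1, ∃ x, t < f x) (hgs : ∀ t < 1, ∃ x, t < g x)
    (H : ∀ x y, f x * g y ≤ h ((x + y) / 2) ^ 2) :
    (∫⁻ x, ENNReal.ofReal (f x)) * (∫⁻ x, ENNReal.ofReal (g x))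
      ≤ (∫⁻ x, ENNReal.ofReal (h x)) ^ 2 := by
  apply ennreal_mul_le_sq_of_add_le
  rw [lintegral_eq_lintegral_meas_lt _ (.of_forall hf0) hf.aemeasurable,
    lintegral_eq_lintegral_meas_lt _ (.of_forall hg0) hg.aemeasurable,
    lintegral_eq_lintegral_meas_lt _ (.of_forall hh0) hh.aemeasurable]
  have hm : ∀ u : ℝ → ℝ, Measurable fun t => volume {a | t < u a} := fun u =>
    Antitone.measurable fun s t hst => measure_mono fun a ha => lt_of_le_of_lt hst ha
  rw [← lintegral_add_left (hm f), ← lintegral_const_mul _ (hm h)]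
  refine setLIntegral_mono ((hm h).const_mul _) fun t ht => ?_
  have ht : 0 < t := ht
  rcases lt_or_ge t 1 with h1 | h1
  · refine volume_add_le_of_midpoint (measurableSet_lt measurable_const hf)
      (measurableSet_lt measurable_const hg) (hfs t h1) (hgs t h1) fun x hx y hy => ?_
    have hx : t < f x := hx
    have hy : t < g y := hy
    refine lt_of_pow_lt_pow_left₀ 2 (hh0 _) (lt_of_lt_of_le ?_ (H x y))
    nlinarith
  · have e1 : {a | t < f a} = ∅ := Set.eq_empty_of_forall_notMem fun x hx =>
      absurd (hf1 x) (not_le.2 (lt_of_le_of_lt h1 hx))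
    have e2 : {a | t < g a} = ∅ := Set.eq_empty_of_forall_notMem fun x hx =>
      absurd (hg1 x) (not_le.2 (lt_of_le_of_lt h1 hx))
    simp [e1, e2]

/-- The Prékopa–Leindler inequality with weight `1/2` holds for the measure `μ`, in the
square-root-free form `(∫ f) (∫ g) ≤ (∫ h) ^ 2` and for `[0, ∞]`-valued functions. -/
def PrekopaLeindler {E : Type*} [AddCommGroup E] [Module ℝ E] [MeasurableSpace E]
    (μ : Measure E) : Prop :=
  ∀ f g h : E → ℝ≥0∞, Measurable f → Measurable g → Measurable h →
    (∀ x y, f x * g y ≤ h ((2 : ℝ)⁻¹ • (x + y)) ^ 2) →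
    (∫⁻ x, f x ∂μ) * (∫⁻ x, g x ∂μ) ≤ (∫⁻ x, h x ∂μ) ^ 2

/-- Reduction to the normalized case: `f` and `g` are divided by their suprema `α` and `β`, and
`h` by `√(α * β)`. -/
lemma prekopaLeindler_real_bounded {f g h : ℝ → ℝ≥0∞} (hf : Measurable f) (hg : Measurable g)
    (hh : Measurable h) (hfb : ⨆ x, f x ≠ ∞) (hgb : ⨆ x, g x ≠ ∞)
    (H : ∀ x y, f x * g y ≤ h ((x + y) / 2) ^ 2) :
    (∫⁻ x, f x) * (∫⁻ x, g x) ≤ (∫⁻ x, h x) ^ 2 := by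
  by_cases hf0 : ⨆ x, f x = 0
  · have : ∀ x, f x = 0 := fun x => by simpa [hf0] using le_iSup f x
    simp [this]
  by_cases hg0 : ⨆ x, g x = 0
  · have : ∀ x, g x = 0 := fun x => by simpa [hg0] using le_iSup g x
    simp [this]
  obtain ⟨α, hα, hα'⟩ : ∃ α : ℝ, 0 < α ∧ ⨆ x, f x = ENNReal.ofReal α :=
    ⟨_, ENNReal.toReal_pos hf0 hfb, (ENNReal.ofReal_toReal hfb).symm⟩
  obtain ⟨β, hβ, hβ'⟩ : ∃ β : ℝ, 0 < β ∧ ⨆ x, g x = ENNReal.ofReal β :=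
    ⟨_, ENNReal.toReal_pos hg0 hgb, (ENNReal.ofReal_toReal hgb).symm⟩
  have hft : ∀ x, f x ≠ ∞ := fun x => ne_top_of_le_ne_top hfb (le_iSup f x)
  have hgt : ∀ x, g x ≠ ∞ := fun x => ne_top_of_le_ne_top hgb (le_iSup g x)
  have hfα : ∀ x, (f x).toReal ≤ α := fun x =>
    ENNReal.toReal_le_of_le_ofReal hα.le (hα' ▸ le_iSup f x)
  have hgβ : ∀ x, (g x).toReal ≤ β := fun x =>
    ENNReal.toReal_le_of_le_ofReal hβ.le (hβ' ▸ le_iSup g x)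
  set s := √(α * β) with hs
  have hs0 : 0 < s := Real.sqrt_pos.2 (mul_pos hα hβ)
  have hs2 : s ^ 2 = α * β := Real.sq_sqrt (mul_pos hα hβ).le
  -- Truncating `h` at `s` makes it finite and keeps the hypothesis, since `f x * g y ≤ s ^ 2`.
  set h' : ℝ → ℝ≥0∞ := fun x => min (h x) (ENNReal.ofReal s) with hh'
  have hh't : ∀ x, h' x ≠ ∞ := fun x =>
    ne_top_of_le_ne_top ENNReal.ofReal_ne_top (min_le_right _ _)
  have hsup : ∀ (u : ℝ → ℝ≥0∞) (γ : ℝ), 0 < γ → (∀ x, u x ≠ ∞) → ⨆ x, u x = ENNReal.ofReal γ →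
      ∀ t < 1, ∃ x, t < (u x).toReal / γ := by
    intro u γ hγ hu huγ t ht
    have h1 : ENNReal.ofReal (t * γ) < ⨆ x, u x := by
      rw [huγ]; exact (ENNReal.ofReal_lt_ofReal_iff hγ).2 (by nlinarith)
    obtain ⟨x, hx⟩ := lt_iSup_iff.1 h1
    refine ⟨x, (lt_div_iff₀ hγ).2 ?_⟩
    by_contra! hcon
    refine absurd hx (not_lt.2 ?_)
    rw [← ENNReal.ofReal_toReal (hu x)]
    exact ENNReal.ofReal_le_ofReal hcon
  have key := prekopaLeindler_real_normalized (f := fun x => (f x).toReal / α)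
    (g := fun x => (g x).toReal / β) (h := fun x => (h' x).toReal / s)
    (hf.ennreal_toReal.div_const _) (hg.ennreal_toReal.div_const _)
    ((hh.min measurable_const).ennreal_toReal.div_const _)
    (fun x => by positivity) (fun x => by positivity) (fun x => by positivity)
    (fun x => (div_le_one hα).2 (hfα x)) (fun x => (div_le_one hβ).2 (hgβ x))
    (hsup f α hα hft hα') (hsup g β hβ hgt hβ') (by
      intro x y
      rw [div_mul_div_comm, div_pow, hs2]
      gcongr
      have hle : f x * g y ≤ h' ((x + y) / 2) ^ 2 := by
        simp only [hh']
        rcases le_total (h ((x + y) / 2)) (ENNReal.ofReal s) with h1 | h1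
        · rw [min_eq_left h1]; exact H x y
        · rw [min_eq_right h1, ← ENNReal.ofReal_pow hs0.le, hs2, ENNReal.ofReal_mul hα.le]
          exact mul_le_mul' (hα' ▸ le_iSup f x) (hβ' ▸ le_iSup g y)
      rw [← ENNReal.toReal_mul, ← ENNReal.toReal_pow]
      exact ENNReal.toReal_mono (ENNReal.pow_ne_top (hh't _)) hle)
  have hscale : ∀ (u : ℝ → ℝ≥0∞) (γ : ℝ), 0 < γ → (∀ x, u x ≠ ∞) →
      ∫⁻ x, u x = ENNReal.ofReal γ * ∫⁻ x, ENNReal.ofReal ((u x).toReal / γ) := by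
    intro u γ hγ hu
    rw [← lintegral_const_mul' _ _ ENNReal.ofReal_ne_top]
    congr with x
    rw [← ENNReal.ofReal_mul hγ.le, mul_div_cancel₀ _ hγ.ne', ENNReal.ofReal_toReal (hu x)]
  calc (∫⁻ x, f x) * (∫⁻ x, g x)
      = ENNReal.ofReal s ^ 2 * ((∫⁻ x, ENNReal.ofReal ((f x).toReal / α)) *
          ∫⁻ x, ENNReal.ofReal ((g x).toReal / β)) := by
        rw [hscale f α hα hft, hscale g β hβ hgt, ← ENNReal.ofReal_pow hs0.le, hs2,
          ENNReal.ofReal_mul hα.le]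
        ring
    _ ≤ ENNReal.ofReal s ^ 2 * (∫⁻ x, ENNReal.ofReal ((h' x).toReal / s)) ^ 2 := by gcongr
    _ = (∫⁻ x, h' x) ^ 2 := by rw [hscale h' s hs0 hh't, mul_pow]
    _ ≤ (∫⁻ x, h x) ^ 2 := by
        gcongr with x
        exact min_le_left _ _

lemma prekopaLeindler_real : PrekopaLeindler (volume : Measure ℝ) := by
  intro f g h hf hg hh H
  have Hmid : ∀ x y, f x * g y ≤ h ((x + y) / 2) ^ 2 := fun x y => by
    have := H x y
    rwa [smul_eq_mul, inv_mul_eq_div] at this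
  have hlim : ∀ u : ℝ → ℝ≥0∞, Measurable u →
      ∫⁻ x, u x = ⨆ k : ℕ, ∫⁻ x, min (u x) k := fun u hu => by
    rw [← lintegral_iSup (fun k => hu.min measurable_const)
      (fun i j hij x => min_le_min le_rfl (by exact_mod_cast hij))]
    congr with x
    rw [← inf_iSup_eq, ENNReal.iSup_natCast, inf_top_eq]
  rw [hlim f hf, hlim g hg, ENNReal.iSup_mul]
  refine iSup_le fun k => ?_
  rw [ENNReal.mul_iSup]
  refine iSup_le fun j => ?_
  have hb : ∀ (u : ℝ → ℝ≥0∞) (k : ℕ), ⨆ x, min (u x) (k : ℝ≥0∞) ≠ ∞ := fun u k =>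
    ne_top_of_le_ne_top (ENNReal.natCast_ne_top k) (iSup_le fun x => min_le_right _ _)
  exact prekopaLeindler_real_bounded (hf.min measurable_const) (hg.min measurable_const) hh
    (hb f k) (hb g j) fun x y => (mul_le_mul' (min_le_left _ _) (min_le_left _ _)).trans (Hmid x y)

/-- Tensorization: the inequality is applied first to the sections, then to the marginals. -/
lemma PrekopaLeindler.prod {E F : Type*} [AddCommGroup E] [Module ℝ E] [MeasurableSpace E]
    [AddCommGroup F] [Module ℝ F] [MeasurableSpace F] {μ : Measure E} {ν : Measure F}
    [SFinite μ] [SFinite ν] (hμ : PrekopaLeindler μ) (hν : PrekopaLeindler ν) :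
    PrekopaLeindler (μ.prod ν) := by
  intro f g h hf hg hh H
  rw [lintegral_prod _ hf.aemeasurable, lintegral_prod _ hg.aemeasurable,
    lintegral_prod _ hh.aemeasurable]
  refine hμ _ _ _ hf.lintegral_prod_right' hg.lintegral_prod_right' hh.lintegral_prod_right'
    fun x y => ?_
  exact hν _ _ _ (hf.comp measurable_prodMk_left) (hg.comp measurable_prodMk_left)
    (hh.comp measurable_prodMk_left) fun x' y' => H (x, x') (y, y')

lemma PrekopaLeindler.of_measurePreserving {E F : Type*} [AddCommGroup E] [Module ℝ E]
    [MeasurableSpace E] [AddCommGroup F] [Module ℝ F] [MeasurableSpace F] {μ : Measure E}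
    {ν : Measure F} (hμ : PrekopaLeindler μ) (e : E →ₗ[ℝ] F) (he : MeasurePreserving e μ ν) :
    PrekopaLeindler ν := by
  intro f g h hf hg hh H
  rw [← he.lintegral_comp hf, ← he.lintegral_comp hg, ← he.lintegral_comp hh]
  refine hμ _ _ _ (hf.comp he.measurable) (hg.comp he.measurable) (hh.comp he.measurable)
    fun x y => ?_
  simpa using H (e x) (e y)

lemma prekopaLeindler_pi (n : ℕ) : PrekopaLeindler (volume : Measure (Fin n → ℝ)) := by
  induction n with
  | zero =>
    intro f g h _ _ _ H
    have hv : (volume : Measure (Fin 0 → ℝ)) = Measure.dirac 0 := by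
      rw [volume_pi]; exact Measure.pi_of_empty _ _
    simpa [hv] using H 0 0
  | succ n ih =>
    have hp := (volume_preserving_piFinSuccAbove (fun _ : Fin (n + 1) => ℝ) 0).symm
    refine (prekopaLeindler_real.prod ih).of_measurePreserving
      (Fin.consLinearEquiv ℝ (fun _ : Fin (n + 1) => ℝ)).toLinearMap ?_
    have he : ⇑(Fin.consLinearEquiv ℝ (fun _ : Fin (n + 1) => ℝ)).toLinearMap =
        ⇑(MeasurableEquiv.piFinSuccAbove (fun _ : Fin (n + 1) => ℝ) 0).symm := by
      funext p
      refine funext fun i => ?_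
      refine Fin.cases ?_ (fun i => ?_) i <;>
        simp [Fin.consLinearEquiv, MeasurableEquiv.piFinSuccAbove]
    rw [he]
    exact hp

lemma prekopaLeindler_euclideanSpace (n : ℕ) :
    PrekopaLeindler (volume : Measure (EuclideanSpace ℝ (Fin n))) :=
  (prekopaLeindler_pi n).of_measurePreserving
    (WithLp.linearEquiv 2 ℝ (Fin n → ℝ)).symm.toLinearMap (PiLp.volume_preserving_toLp (Fin n))

/-! ### Concentration for strongly log-concave densities -/

/-- An a.e. measurable function is squeezed, everywhere, between two measurable functions which
agree with it almost everywhere. -/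
lemma exists_measurable_le_ge {α : Type*} [MeasurableSpace α] {μ : Measure α} {f : α → ℝ≥0∞}
    (hf : AEMeasurable f μ) : ∃ g h : α → ℝ≥0∞, Measurable g ∧ Measurable h ∧
      (∀ x, g x ≤ f x) ∧ (∀ x, f x ≤ h x) ∧ f =ᵐ[μ] g ∧ f =ᵐ[μ] h := by
  classical
  obtain ⟨t, hst, ht, ht0⟩ := exists_measurable_superset_of_null (ae_iff.1 hf.ae_eq_mk)
  have hmk : ∀ x ∉ t, f x = hf.mk f x := fun x hx => by
    by_contra hne; exact hx (hst hne)
  have hae : ∀ᵐ x ∂μ, x ∉ t := measure_eq_zero_iff_ae_notMem.1 ht0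
  refine ⟨t.piecewise 0 (hf.mk f), t.piecewise ⊤ (hf.mk f),
    measurable_const.piecewise ht hf.measurable_mk, measurable_const.piecewise ht hf.measurable_mk,
    fun x => ?_, fun x => ?_, ?_, ?_⟩
  · by_cases hx : x ∈ t <;> simp [hx, hmk]
  · by_cases hx : x ∈ t <;> simp [hx, hmk]
  · filter_upwards [hae] with x hx; simp [hx, hmk]
  · filter_upwards [hae] with x hx; simp [hx, hmk]

/-- Jensen's inequality for `exp`, with the right-hand side allowed to be infinite. -/
lemma ofReal_exp_integral_le {α : Type*} [MeasurableSpace α] {μ : Measure α}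
    [IsProbabilityMeasure μ] {q : α → ℝ} (hq : Integrable q μ) :
    ENNReal.ofReal (Real.exp (∫ x, q x ∂μ)) ≤ ∫⁻ x, ENNReal.ofReal (Real.exp (q x)) ∂μ := by
  by_cases htop : ∫⁻ x, ENNReal.ofReal (Real.exp (q x)) ∂μ = ∞
  · rw [htop]; exact le_top
  have hexp : Integrable (fun x => Real.exp (q x)) μ := by
    refine (lintegral_ofReal_ne_top_iff_integrable
      (Real.continuous_exp.comp_aestronglyMeasurable hq.aestronglyMeasurable)
      (.of_forall fun x => (Real.exp_pos _).le)).1 htop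
  rw [← ofReal_integral_eq_lintegral_ofReal hexp (.of_forall fun x => (Real.exp_pos _).le)]
  refine ENNReal.ofReal_le_ofReal ?_
  exact convexOn_exp.map_integral_le Real.continuous_exp.continuousOn isClosed_univ
    (.of_forall fun _ => Set.mem_univ _) hq hexp

lemma IsStronglyLogConcaveDensity.midpoint_pos {n : ℕ} {c : ℝ}
    {ρ : EuclideanSpace ℝ (Fin n) → ℝ} (h : IsStronglyLogConcaveDensity c ρ)
    {x y : EuclideanSpace ℝ (Fin n)} (hx : 0 < ρ x) (hy : 0 < ρ y) :
    0 < ρ ((2 : ℝ)⁻¹ • (x + y)) := by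
  have hmem : (2 : ℝ)⁻¹ • x + (2 : ℝ)⁻¹ • y ∈ {z | 0 < ρ z} :=
    h.1 hx hy (by norm_num) (by norm_num) (by norm_num)
  rwa [← smul_add] at hmem

/-- Strong log-concavity in multiplicative form. -/
lemma IsStronglyLogConcaveDensity.mul_le {n : ℕ} {c : ℝ} {ρ : EuclideanSpace ℝ (Fin n) → ℝ}
    (h : IsStronglyLogConcaveDensity c ρ) {x y : EuclideanSpace ℝ (Fin n)}
    (hx : 0 < ρ x) (hy : 0 < ρ y) :
    ρ x * (ρ y * Real.exp (2 * c * ‖x - y‖ ^ 2)) ≤ ρ ((2 : ℝ)⁻¹ • (x + y)) ^ 2 := by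
  have hm := h.midpoint_pos hx hy
  have h2 := h.2 x hx y hy
  rw [← Real.log_le_log_iff (by positivity) (by positivity), Real.log_mul (by positivity)
    (by positivity), Real.log_mul (by positivity) (by positivity), Real.log_exp, Real.log_pow]
  push_cast
  linarith

/-- Maurey's form of Gaussian concentration for a strongly log-concave measure: if `q` is bounded
by `2c` times the squared distance to each point of `A`, then `P(A) ∫ exp q dP ≤ 1` by
Prékopa–Leindler, and Jensen's inequality bounds the integral from below. -/
lemma measure_le_exp_neg_integral {n : ℕ} {c : ℝ} {ρ : EuclideanSpace ℝ (Fin n) → ℝ}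
    (hm : AEMeasurable ρ) (h : IsStronglyLogConcaveDensity c ρ)
    {P : Measure (EuclideanSpace ℝ (Fin n))} [IsProbabilityMeasure P]
    (hP : P = volume.withDensity (fun z => ENNReal.ofReal (ρ z)))
    {A : Set (EuclideanSpace ℝ (Fin n))} (hA : MeasurableSet A)
    {q : EuclideanSpace ℝ (Fin n) → ℝ} (hqm : Measurable q) (hqi : Integrable q P)
    (hq : ∀ x ∈ A, ∀ y, q y ≤ 2 * c * ‖x - y‖ ^ 2) :
    P A ≤ ENNReal.ofReal (Real.exp (-∫ x, q x ∂P)) := by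
  -- `ρ` is only a.e. measurable, whereas Prékopa–Leindler asks for measurability and a pointwise
  -- inequality: a minorant `r` is used on the left and a majorant `s` at the midpoint.
  obtain ⟨r, s, hr, hs, hrρ, hρs, hr', hs'⟩ := exists_measurable_le_ge hm.ennreal_ofReal
  have hPr : P = volume.withDensity r := hP.trans (withDensity_congr_ae hr')
  have hPs : P = volume.withDensity s := hP.trans (withDensity_congr_ae hs')
  have hs1 : ∫⁻ x, s x = 1 := by
    have := measure_univ (μ := P)
    rwa [hPs, withDensity_apply _ MeasurableSet.univ, setLIntegral_univ] at this
  have key := prekopaLeindler_euclideanSpace n (A.indicator r)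
    (fun y => r y * ENNReal.ofReal (Real.exp (q y))) s (hr.indicator hA)
    (hr.mul hqm.exp.ennreal_ofReal) hs (by
      intro x y
      by_cases hxA : x ∈ A
      swap
      · simp [hxA]
      rw [Set.indicator_of_mem hxA]
      by_cases hx : 0 < ρ x
      swap
      · have : r x = 0 := by simpa [ENNReal.ofReal_of_nonpos (not_lt.1 hx)] using hrρ x
        simp [this]
      by_cases hy : 0 < ρ y
      swap
      · have : r y = 0 := by simpa [ENNReal.ofReal_of_nonpos (not_lt.1 hy)] using hrρ y
        simp [this]
      calc r x * (r y * ENNReal.ofReal (Real.exp (q y)))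
          ≤ ENNReal.ofReal (ρ x) * (ENNReal.ofReal (ρ y) *
              ENNReal.ofReal (Real.exp (2 * c * ‖x - y‖ ^ 2))) := by
            gcongr
            · exact hrρ x
            · exact hrρ y
            · exact hq x hxA y
        _ = ENNReal.ofReal (ρ x * (ρ y * Real.exp (2 * c * ‖x - y‖ ^ 2))) := by
            rw [ENNReal.ofReal_mul hx.le, ENNReal.ofReal_mul hy.le]
        _ ≤ ENNReal.ofReal (ρ ((2 : ℝ)⁻¹ • (x + y)) ^ 2) :=
            ENNReal.ofReal_le_ofReal (h.mul_le hx hy)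
        _ = ENNReal.ofReal (ρ ((2 : ℝ)⁻¹ • (x + y))) ^ 2 :=
            ENNReal.ofReal_pow (h.midpoint_pos hx hy).le 2
        _ ≤ s ((2 : ℝ)⁻¹ • (x + y)) ^ 2 := by
            gcongr
            exact hρs _)
  rw [hs1, one_pow, lintegral_indicator hA, ← withDensity_apply _ hA, ← hPr,
    show ∫⁻ y, r y * ENNReal.ofReal (Real.exp (q y)) = ∫⁻ y, ENNReal.ofReal (Real.exp (q y)) ∂P by
      rw [hPr, lintegral_withDensity_eq_lintegral_mul _ hr hqm.exp.ennreal_ofReal]; rfl] at key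
  rw [Real.exp_neg, ENNReal.ofReal_inv_of_pos (Real.exp_pos _), ENNReal.le_inv_iff_mul_le]
  exact (mul_le_mul_right (ofReal_exp_integral_le hqi) _).trans key

lemma aemeasurable_of_isIsotropicDensity {n : ℕ} (hn : n ≠ 0) {ρ : EuclideanSpace ℝ (Fin n) → ℝ}
    (h : IsIsotropicDensity ρ) : AEMeasurable ρ := by
  have : NeZero n := ⟨hn⟩
  set θ : EuclideanSpace ℝ (Fin n) := EuclideanSpace.single 0 1
  have hθ : ‖θ‖ = 1 := by simp [θ]
  have hi : Integrable fun z => ρ z * ⟪z, θ⟫ ^ 2 := integrable_of_integral_eq_one (h.2 θ hθ)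
  have h0 : ∀ᵐ z : EuclideanSpace ℝ (Fin n), ⟪z, θ⟫ ≠ 0 := by
    have hne : (ℝ ∙ θ)ᗮ ≠ ⊤ := by
      intro htop
      have : θ ∈ (ℝ ∙ θ)ᗮ := htop ▸ Submodule.mem_top
      rw [Submodule.mem_orthogonal_singleton_iff_inner_left, real_inner_self_eq_norm_sq, hθ] at this
      norm_num at this
    have := measure_eq_zero_iff_ae_notMem.1 (Measure.addHaar_submodule volume _ hne)
    filter_upwards [this] with z hz hz'
    exact hz ((Submodule.mem_orthogonal_singleton_iff_inner_left).2 hz')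
  have hd : AEMeasurable (fun z => ρ z * ⟪z, θ⟫ ^ 2 / ⟪z, θ⟫ ^ 2) :=
    hi.aemeasurable.div (by fun_prop)
  refine hd.congr ?_
  filter_upwards [h0] with z hz
  field_simp

section Moments

variable {n : ℕ} {ρ : EuclideanSpace ℝ (Fin n) → ℝ} {P : Measure (EuclideanSpace ℝ (Fin n))}

lemma integrable_inner_sq (hm : AEMeasurable ρ) (hρ0 : ∀ z, 0 ≤ ρ z) (h : IsIsotropicDensity ρ)
    (hP : P = volume.withDensity (fun z => ENNReal.ofReal (ρ z)))
    {θ : EuclideanSpace ℝ (Fin n)} (hθ : ‖θ‖ = 1) :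
    Integrable (fun z => ⟪z, θ⟫ ^ 2) P ∧ ∫ z, ⟪z, θ⟫ ^ 2 ∂P = 1 := by
  have hi : Integrable fun z => ρ z * ⟪z, θ⟫ ^ 2 := integrable_of_integral_eq_one (h.2 θ hθ)
  rw [hP]
  constructor
  · rw [integrable_withDensity_iff_integrable_smul₀' hm.ennreal_ofReal (by simp)]
    simpa [ENNReal.toReal_ofReal, hρ0] using hi
  · rw [integral_withDensity_eq_integral_toReal_smul₀ hm.ennreal_ofReal (by simp)]
    simpa [ENNReal.toReal_ofReal, hρ0] using h.2 θ hθ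

lemma integrable_norm_sq (hm : AEMeasurable ρ) (hρ0 : ∀ z, 0 ≤ ρ z) (h : IsIsotropicDensity ρ)
    (hP : P = volume.withDensity (fun z => ENNReal.ofReal (ρ z))) :
    Integrable (fun z => ‖z‖ ^ 2) P ∧ ∫ z, ‖z‖ ^ 2 ∂P = n := by
  have hsum : (fun z : EuclideanSpace ℝ (Fin n) => ‖z‖ ^ 2) =
      fun z => ∑ i, ⟪z, EuclideanSpace.single i (1 : ℝ)⟫ ^ 2 := by
    funext z
    simp [EuclideanSpace.norm_sq_eq, EuclideanSpace.inner_single_right]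
  have hi := fun i : Fin n => integrable_inner_sq hm hρ0 h hP
    (θ := EuclideanSpace.single i (1 : ℝ)) (by simp)
  rw [hsum]
  refine ⟨integrable_finsetSum _ fun i _ => (hi i).1, ?_⟩
  rw [integral_finsetSum _ fun i _ => (hi i).1]
  simp [(hi _).2]

lemma integrable_inner [IsProbabilityMeasure P] (hm : AEMeasurable ρ) (hρ0 : ∀ z, 0 ≤ ρ z)
    (h : IsIsotropicDensity ρ) (hP : P = volume.withDensity (fun z => ENNReal.ofReal (ρ z)))
    (x : EuclideanSpace ℝ (Fin n)) :
    Integrable (fun z => ⟪x, z⟫) P ∧ ∫ z, ⟪x, z⟫ ∂P = 0 := by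
  have hi : Integrable (fun z : EuclideanSpace ℝ (Fin n) => z) P :=
    ((memLp_two_iff_integrable_sq_norm (by fun_prop)).2
      (integrable_norm_sq hm hρ0 h hP).1).integrable (by norm_num)
  have hmean : ∫ z, z ∂P = 0 := by
    rw [hP, integral_withDensity_eq_integral_toReal_smul₀ hm.ennreal_ofReal (by simp)]
    simpa [ENNReal.toReal_ofReal, hρ0] using h.1
  exact ⟨hi.const_inner x, by rw [integral_inner hi, hmean, inner_zero_right]⟩

end Moments

/-! ### Fisher separability -/

theorem stmt_15 (c : ℝ) (hc : 0 < c)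
    (P : ∀ n : ℕ, Measure (EuclideanSpace ℝ (Fin n)))
    (hprob : ∀ n, IsProbabilityMeasure (P n))
    (ρ : ∀ n : ℕ, EuclideanSpace ℝ (Fin n) → ℝ)
    (hρ0 : ∀ n z, 0 ≤ ρ n z)
    (hPdef : ∀ n, P n = volume.withDensity (fun z => ENNReal.ofReal (ρ n z)))
    (hslc : ∀ n, IsStronglyLogConcaveDensity c (ρ n))
    (hiso : ∀ n, IsIsotropicDensity (ρ n)) :
    ExpFisherSeparability P := by
  refine ⟨2, by norm_num, Real.exp (-(c / 2)), ⟨Real.exp_pos _, by simpa using hc⟩, fun n => ?_⟩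
  have := hprob n
  rcases eq_or_ne n 0 with rfl | hn
  · calc _ ≤ (1 : ℝ≥0∞) := prob_le_one
      _ ≤ _ := by simp
  have hm := aemeasurable_of_isIsotropicDensity hn (hiso n)
  -- Small ball estimate, from `‖y‖ ^ 2 ≤ 2 ‖x - y‖ ^ 2 + 2 ‖x‖ ^ 2`.
  have hball : P n {x | ‖x‖ ^ 2 < n / 4} ≤ ENNReal.ofReal (Real.exp (-(c / 2)) ^ n) := by
    obtain ⟨hi, hint⟩ := integrable_norm_sq hm (hρ0 n) (hiso n) (hPdef n)
    have := measure_le_exp_neg_integral hm (hslc n) (hPdef n)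
      (A := {x | ‖x‖ ^ 2 < n / 4}) (measurableSet_lt (by fun_prop) measurable_const)
      (q := fun y => c * ‖y‖ ^ 2 - c * n / 2) (by fun_prop)
      ((hi.const_mul c).sub (integrable_const _)) (by
        intro x hx y
        have hx : ‖x‖ ^ 2 < n / 4 := hx
        have h1 : ‖y‖ ≤ ‖x‖ + ‖x - y‖ := by
          simpa using norm_sub_le x (x - y)
        have h2 : ‖y‖ ^ 2 ≤ 2 * ‖x - y‖ ^ 2 + 2 * ‖x‖ ^ 2 := by
          nlinarith [norm_nonneg y, sq_nonneg (‖x‖ - ‖x - y‖)]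
        nlinarith)
    rw [integral_sub (hi.const_mul c) (integrable_const _), integral_const_mul, hint] at this
    refine this.trans_eq ?_
    rw [← Real.exp_nat_mul]
    simp
    ring_nf
  -- Half-space estimate, from `‖z - y‖ ^ 2 ≥ 2 ⟪x, z - y⟫ - ‖x‖ ^ 2`.
  have hhalf : ∀ x : EuclideanSpace ℝ (Fin n), n / 4 ≤ ‖x‖ ^ 2 →
      P n {y | ⟪x, x⟫ ≤ ⟪x, y⟫} ≤ ENNReal.ofReal (Real.exp (-(c / 2)) ^ n) := by
    intro x hx
    obtain ⟨hi, hint⟩ := integrable_inner hm (hρ0 n) (hiso n) (hPdef n) x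
    have := measure_le_exp_neg_integral hm (hslc n) (hPdef n)
      (A := {y | ⟪x, x⟫ ≤ ⟪x, y⟫}) (measurableSet_le measurable_const (by fun_prop))
      (q := fun y => 2 * c * ‖x‖ ^ 2 - 4 * c * ⟪x, y⟫) (by fun_prop)
      ((integrable_const _).sub (hi.const_mul _)) (by
        intro z hz y
        have hz : ⟪x, x⟫ ≤ ⟪x, z⟫ := hz
        rw [real_inner_self_eq_norm_sq] at hz
        have h1 : 0 ≤ ‖(z - y) - x‖ ^ 2 := by positivity
        rw [norm_sub_sq_real, real_inner_comm, inner_sub_right] at h1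
        nlinarith)
    rw [integral_sub (integrable_const _) (hi.const_mul _), integral_const_mul (4 * c), hint]
      at this
    refine this.trans (ENNReal.ofReal_le_ofReal ?_)
    rw [← Real.exp_nat_mul, Real.exp_le_exp]
    simp
    nlinarith
  have hS : MeasurableSet {p : EuclideanSpace ℝ (Fin n) × EuclideanSpace ℝ (Fin n) |
      ⟪p.1, p.1⟫ ≤ ⟪p.1, p.2⟫} := measurableSet_le (by fun_prop) (by fun_prop)
  set B : Set (EuclideanSpace ℝ (Fin n)) := {x | ‖x‖ ^ 2 < n / 4}
  have hB : MeasurableSet B := measurableSet_lt (by fun_prop) measurable_const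
  rw [Measure.prod_apply hS]
  calc ∫⁻ x, P n (Prod.mk x ⁻¹' {p | ⟪p.1, p.1⟫ ≤ ⟪p.1, p.2⟫}) ∂P n
      ≤ ∫⁻ x, (B.indicator 1 x + ENNReal.ofReal (Real.exp (-(c / 2)) ^ n)) ∂P n := by
        refine lintegral_mono fun x => ?_
        by_cases hx : x ∈ B
        · simp only [Set.indicator_of_mem hx, Pi.one_apply]
          exact prob_le_one.trans le_self_add
        · exact (hhalf x (not_lt.1 hx)).trans le_add_self
    _ = P n B + ENNReal.ofReal (Real.exp (-(c / 2)) ^ n) := by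
        rw [lintegral_add_right _ measurable_const, lintegral_indicator_one hB]
        simp
    _ ≤ ENNReal.ofReal (Real.exp (-(c / 2)) ^ n) + ENNReal.ofReal (Real.exp (-(c / 2)) ^ n) := by
        gcongr
    _ = _ := by
        rw [← ENNReal.ofReal_add (by positivity) (by positivity), two_mul]
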